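/- There is no normal 3-multimagic square of order m for any positive integer m with m ≡ 2 (mod 4). -/

import Mathlib

/-!
Write `m = 2k` with `k` odd. Summing a normal square by rows, the common sum of the entries is
`(1 + ⋯ + m²) / m = k (4k² + 1)`, which is odd, while the common sum of the cubes is
`(1³ + ⋯ + (m²)³) / m = 2k³ (4k² + 1)²`, which is even. Since `x³ ≡ x (mod 2)`, the sums of the
entries and of their cubes along any one row have the same parity, a contradiction.
-/

/-- An `m × m` matrix of natural numbers is a magic square if all row sums,
all column sums, the main diagonal sum and the antidiagonal sum are equal. -/
def IsMagicSquare {m : ℕ} (M : Fin m → Fin m → ℕ) : Prop :=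
  ∃ S : ℕ,
    (∀ i, (∑ j, M i j) = S) ∧
    (∀ j, (∑ i, M i j) = S) ∧
    (∑ i, M i i) = S ∧
    (∑ i, M i i.rev) = S

/-- `M` is `n`-multimagic if the entrywise `d`-th power of `M` is magic for `d = 1, …, n`. -/
def IsMultimagic {m : ℕ} (n : ℕ) (M : Fin m → Fin m → ℕ) : Prop :=
  ∀ d, 1 ≤ d → d ≤ n → IsMagicSquare (fun i j => M i j ^ d)

/-- `M` is normal if its entries are exactly `1, 2, …, m²`, each occurring once. -/
def IsNormal {m : ℕ} (M : Fin m → Fin m → ℕ) : Prop :=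
  Function.Injective (fun p : Fin m × Fin m => M p.1 p.2) ∧
  Set.range (fun p : Fin m × Fin m => M p.1 p.2) = Set.Icc 1 (m ^ 2)

theorem two_mul_sum_Icc (N : ℕ) : 2 * ∑ x ∈ Finset.Icc 1 N, x = N * (N + 1) := by
  induction N with
  | zero => simp
  | succ n ih =>
    rw [Finset.sum_Icc_succ_top (by omega), mul_add, ih]
    ring

theorem four_mul_sum_Icc_cube (N : ℕ) :
    4 * ∑ x ∈ Finset.Icc 1 N, x ^ 3 = (N * (N + 1)) ^ 2 := by
  induction N with
  | zero => simp
  | succ n ih =>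
    rw [Finset.sum_Icc_succ_top (by omega), mul_add, ih]
    ring

/-- If every row of the matrix with entries `f (M i j)` sums to `S`, then counting the entries of a normal square row by row
gives `m * S = f 1 + ⋯ + f (m²)`. -/
theorem IsNormal.mul_rowSum {m : ℕ} {M : Fin m → Fin m → ℕ} (h : IsNormal M) (f : ℕ → ℕ)
    {S : ℕ} (hS : ∀ i, ∑ j, f (M i j) = S) :
    m * S = ∑ x ∈ Finset.Icc 1 (m ^ 2), f x := by
  have himg : Finset.univ.image (fun p : Fin m × Fin m => M p.1 p.2) = Finset.Icc 1 (m ^ 2) := by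
    apply Finset.coe_injective
    rw [Finset.coe_image, Finset.coe_univ, Set.image_univ, Finset.coe_Icc, h.2]
  rw [← himg, Finset.sum_image h.1.injOn, Fintype.sum_prod_type]
  simp [hS]

/-- There is no normal `3`-multimagic square of order `m` for any positive integer `m`
with `m ≡ 2 (mod 4)`. -/
theorem no_trimagic_of_order_two_mod_four
    (m : ℕ) (hm : 0 < m) (hmod : m % 4 = 2) (M : Fin m → Fin m → ℕ) :
    ¬ (IsNormal M ∧ IsMultimagic 3 M) := by
  rintro ⟨hN, hM⟩
  obtain ⟨S, hS, -⟩ := hM 1 le_rfl (by norm_num)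
  obtain ⟨T, hT, -⟩ := hM 3 (by norm_num) le_rfl
  have h1 := hN.mul_rowSum (fun x => x ^ 1) hS
  have h3 := hN.mul_rowSum (fun x => x ^ 3) hT
  simp only [pow_one] at h1
  have e1 := two_mul_sum_Icc (m ^ 2)
  have e3 := four_mul_sum_Icc_cube (m ^ 2)
  rw [← h1] at e1
  rw [← h3] at e3
  have hpar : S % 2 = T % 2 := by
    rw [← hS ⟨0, hm⟩, ← hT ⟨0, hm⟩]
    apply Nat.ModEq.sum
    intro j _
    rcases Nat.mod_two_eq_zero_or_one (M ⟨0, hm⟩ j) with h | h <;>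
      simp [Nat.ModEq, Nat.pow_mod, h]
  obtain ⟨k, rfl, hk⟩ : ∃ k, m = 2 * k ∧ Odd k :=
    ⟨m / 2, by omega, Nat.odd_iff.mpr (by omega)⟩
  have hk0 : 0 < k := by omega
  have s1 : S = k * (4 * k ^ 2 + 1) := by
    apply Nat.eq_of_mul_eq_mul_left (show 0 < 4 * k by omega)
    linarith
  have s3 : T = 2 * (k ^ 3 * (4 * k ^ 2 + 1) ^ 2) := by
    apply Nat.eq_of_mul_eq_mul_left (show 0 < 8 * k by omega)
    linarith
  have hodd : Odd S := by
    rw [s1]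
    exact hk.mul ⟨2 * k ^ 2, by ring⟩
  rw [Nat.odd_iff] at hodd
  omega
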